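/- Let 𝒜 ∈ U(p,q) have block decomposition 𝒜 = (A B; C D). Then 𝒜*𝒜 + I is invertible and its inverse is (1/2)·(I_p, −A⁻¹B; −B*(A*)⁻¹, I_q); that is, (𝒜*𝒜 + I)⁻¹ equals one half of the block matrix with diagonal blocks I_p and I_q and off-diagonal blocks −A⁻¹B and −B*(A*)⁻¹. -/

import Mathlib

open Matrix

/-- The matrix I_{p,q} = diag(I_p, −I_q) defining the indefinite Hermitian form of
signature (p,q). -/
def Ipq (p q : ℕ) : Matrix (Fin p ⊕ Fin q) (Fin p ⊕ Fin q) ℂ :=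
  Matrix.fromBlocks 1 0 0 (-1)

lemma Ipq_mul_self (p q : ℕ) : Ipq p q * Ipq p q = 1 := by
  simp [Ipq, fromBlocks_multiply]

/-- `U(p,q)` is closed under conjugate transposition. -/
lemma mul_Ipq_mul_conjTranspose {p q : ℕ}
    {M : Matrix (Fin p ⊕ Fin q) (Fin p ⊕ Fin q) ℂ}
    (hM : Mᴴ * Ipq p q * M = Ipq p q) : M * Ipq p q * Mᴴ = Ipq p q := by
  have hleft : (Ipq p q * Mᴴ * Ipq p q) * M = 1 := by
    rw [mul_assoc (Ipq p q), mul_assoc (Ipq p q), hM, Ipq_mul_self]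
  have hright := mul_eq_one_comm.mp hleft
  calc M * Ipq p q * Mᴴ = M * (Ipq p q * Mᴴ * Ipq p q) * Ipq p q := by
        simp only [mul_assoc, Ipq_mul_self, mul_one]
    _ = Ipq p q := by rw [hright, one_mul]

open scoped ComplexOrder in
/-- A square matrix `A` with `Aᴴ * A = 1 + Cᴴ * C` is invertible. -/
lemma isUnit_det_of_conjTranspose_mul_self_eq {m n : Type*} [Fintype m] [DecidableEq m]
    [Fintype n] {A : Matrix m m ℂ} {C : Matrix n m ℂ} (h : Aᴴ * A = 1 + Cᴴ * C) :
    IsUnit A.det := by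
  have hpos : (Aᴴ * A).PosDef := by
    rw [h]
    exact PosDef.one.add_posSemidef (posSemidef_conjTranspose_mul_self C)
  have hdet := (isUnit_iff_isUnit_det _).mp hpos.isUnit
  rw [det_mul] at hdet
  exact isUnit_of_mul_isUnit_right hdet

/-- If 𝒜 ∈ U(p,q) has block decomposition 𝒜 = (A B; C D), then 𝒜*𝒜 + I is
invertible and (𝒜*𝒜 + I)⁻¹ = (1/2)·(I_p, −A⁻¹B; −B*(A*)⁻¹, I_q). -/
theorem inverse_of_starSelf_add_one {p q : ℕ} (hp : 1 ≤ p) (hq : 1 ≤ q)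
    (𝒜 : Matrix (Fin p ⊕ Fin q) (Fin p ⊕ Fin q) ℂ)
    (h𝒜 : 𝒜ᴴ * Ipq p q * 𝒜 = Ipq p q) :
    IsUnit (𝒜ᴴ * 𝒜 + 1).det ∧
    (𝒜ᴴ * 𝒜 + 1)⁻¹ =
      (1 / 2 : ℂ) • Matrix.fromBlocks
        (1 : Matrix (Fin p) (Fin p) ℂ)
        (-((𝒜.toBlocks₁₁)⁻¹ * 𝒜.toBlocks₁₂))
        (-((𝒜.toBlocks₁₂)ᴴ * ((𝒜.toBlocks₁₁)ᴴ)⁻¹))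
        (1 : Matrix (Fin q) (Fin q) ℂ) := by
  obtain ⟨A, B, C, D, rfl⟩ : ∃ A B C D, 𝒜 = fromBlocks A B C D :=
    ⟨_, _, _, _, (fromBlocks_toBlocks 𝒜).symm⟩
  have hdual := mul_Ipq_mul_conjTranspose h𝒜
  simp only [Ipq, fromBlocks_conjTranspose, fromBlocks_multiply, fromBlocks_inj,
    Matrix.mul_one, Matrix.mul_zero, add_zero, zero_add, Matrix.mul_neg, Matrix.neg_mul]
    at h𝒜 hdual
  simp only [← sub_eq_add_neg] at h𝒜 hdual
  obtain ⟨h₁₁, h₁₂, h₂₁, h₂₂⟩ := h𝒜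
  have hAB : A * Aᴴ = 1 + B * Bᴴ := sub_eq_iff_eq_add.mp hdual.1
  have hAC : Aᴴ * A = 1 + Cᴴ * C := sub_eq_iff_eq_add.mp h₁₁
  have hCC : Cᴴ * C = Aᴴ * A - 1 := by rw [hAC]; abel
  have hCD : Cᴴ * D = Aᴴ * B := (sub_eq_zero.mp h₁₂).symm
  have hDC : Dᴴ * C = Bᴴ * A := (sub_eq_zero.mp h₂₁).symm
  have hDD : Dᴴ * D = 1 + Bᴴ * B := by
    rw [sub_eq_iff_eq_add] at h₂₂
    rw [h₂₂]
    abel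
  have hA : IsUnit A.det := isUnit_det_of_conjTranspose_mul_self_eq hAC
  have hA' : IsUnit Aᴴ.det := by rw [det_conjTranspose]; exact hA.star
  have hsum : (fromBlocks A B C D)ᴴ * fromBlocks A B C D + 1 =
      (2 : ℂ) • fromBlocks (Aᴴ * A) (Aᴴ * B) (Bᴴ * A) (1 + Bᴴ * B) := by
    rw [fromBlocks_conjTranspose, fromBlocks_multiply, ← fromBlocks_one, fromBlocks_add,
      fromBlocks_smul, hCC, hCD, hDC, hDD]
    simp only [two_smul]
    congr 1 <;> abel
  have hBB : B * Bᴴ = A * Aᴴ - 1 := by rw [hAB]; abel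
  have hinv : ((fromBlocks A B C D)ᴴ * fromBlocks A B C D + 1) *
      ((1 / 2 : ℂ) • fromBlocks 1 (-(A⁻¹ * B)) (-(Bᴴ * Aᴴ⁻¹)) 1) = 1 := by
    rw [hsum, smul_mul_smul_comm, mul_one_div_cancel (two_ne_zero' ℂ), one_smul,
      fromBlocks_multiply, ← fromBlocks_one, fromBlocks_inj]
    simp only [Matrix.mul_one, Matrix.mul_neg]
    refine ⟨?_, ?_, ?_, ?_⟩
    · rw [Matrix.mul_assoc Aᴴ B, ← Matrix.mul_assoc B, hBB, Matrix.sub_mul, mul_nonsing_inv_cancel_right _ _ hA',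
        Matrix.one_mul, Matrix.mul_sub, mul_nonsing_inv _ hA']
      abel
    · rw [Matrix.mul_assoc Aᴴ A, mul_nonsing_inv_cancel_left _ _ hA, neg_add_cancel]
    · rw [Matrix.add_mul, Matrix.one_mul, Matrix.mul_assoc Bᴴ B, ← Matrix.mul_assoc B, hBB, Matrix.sub_mul,
        mul_nonsing_inv_cancel_right _ _ hA', Matrix.one_mul, Matrix.mul_sub]
      abel
    · rw [Matrix.mul_assoc Bᴴ A, mul_nonsing_inv_cancel_left _ _ hA]
      abel
  refine ⟨isUnit_det_of_right_inverse hinv, ?_⟩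
  simpa only [toBlocks_fromBlocks₁₁, toBlocks_fromBlocks₁₂] using inv_eq_right_inv hinv
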